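/- Let G be a simple graph on a finite vertex set, let s be a finite nonempty subset of the vertices, and fix a sink σ ∈ s. Then the subgraph of G induced by s is connected if and only if there exists a function f : s × s → ℕ satisfying: (0) f(u,v) = 0 whenever u = v or {u,v} is not an edge of G, and f(u,v) ≤ |s| − 1 for all u,v; (a) Σ_{u ∈ s \ {σ}} f(u,σ) = |s| − 1; (b) f(σ,v) = 0 for all v ∈ s; (c) for every u ∈ s \ {σ}, Σ_{v ∈ s \ {u}} ( f(u,v) − f(v,u) ) = 1. -/

import Mathlib

/-!
Given a connected induced subgraph, route one unit of flow from every vertex to the sink along a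
path: interior vertices pass on what they receive, a path uses each arc at most once, and it never
leaves its endpoint. Conversely, the net outflow of a vertex set that no edge leaves is zero, so a
nonempty set of non-sink vertices, each generating one unit, is always left by some edge.
-/

section NetOutflow

variable {α : Type*} {s C : Finset α} {f : α → α → ℕ} {σ : α}

/-- The amount by which, in the flow `f` restricted to `s`, the vertex `u` sends out more than it
receives. It is an integer, being negative at the sink; a value `f u u` cancels. -/
def netOutflow (s : Finset α) (f : α → α → ℕ) (u : α) : ℤ :=
  ∑ v ∈ s, ((f u v : ℤ) - f v u)

theorem sum_erase_sub_eq_netOutflow [DecidableEq α] (s : Finset α) (f : α → α → ℕ) (u : α) :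
    ∑ v ∈ s.erase u, ((f u v : ℤ) - f v u) = netOutflow s f u :=
  Finset.sum_erase _ (sub_self _)

theorem netOutflow_sum {ι : Type*} (s : Finset α) (t : Finset ι) (F : ι → α → α → ℕ) (u : α) :
    netOutflow s (fun x y => ∑ i ∈ t, F i x y) u = ∑ i ∈ t, netOutflow s (F i) u := by
  simp only [netOutflow, Nat.cast_sum, ← Finset.sum_sub_distrib]
  exact Finset.sum_comm

theorem sum_netOutflow_eq_zero (s : Finset α) (f : α → α → ℕ) :
    ∑ u ∈ s, netOutflow s f u = 0 := by
  simp only [netOutflow, Finset.sum_sub_distrib]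
  rw [Finset.sum_comm, sub_self]

theorem sum_netOutflow_eq_zero_of_isolated (hCs : C ⊆ s)
    (hout : ∀ u ∈ C, ∀ v ∈ s, v ∉ C → f u v = 0) (hin : ∀ u ∈ C, ∀ v ∈ s, v ∉ C → f v u = 0) :
    ∑ u ∈ C, netOutflow s f u = 0 := by
  rw [← sum_netOutflow_eq_zero C f]
  refine Finset.sum_congr rfl fun u hu => (Finset.sum_subset hCs fun v hv hvC => ?_).symm
  simp [hout u hu v hv hvC, hin u hu v hv hvC]

theorem sum_inflow_sink [DecidableEq α] (hσ : σ ∈ s) (hsink : ∀ v ∈ s, f σ v = 0)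
    (hnet : ∀ u ∈ s.erase σ, netOutflow s f u = 1) :
    ∑ u ∈ s.erase σ, f u σ = s.card - 1 := by
  have hsink_net : netOutflow s f σ = -∑ u ∈ s.erase σ, (f u σ : ℤ) := by
    rw [← sum_erase_sub_eq_netOutflow, ← Finset.sum_neg_distrib]
    refine Finset.sum_congr rfl fun v hv => ?_
    simp [hsink v (Finset.mem_of_mem_erase hv)]
  have htotal := sum_netOutflow_eq_zero s f
  rw [← Finset.add_sum_erase _ _ hσ, hsink_net, Finset.sum_congr rfl hnet, Finset.sum_const,
    Finset.card_erase_of_mem hσ, nsmul_one, neg_add_eq_zero] at htotal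
  exact_mod_cast htotal

end NetOutflow

section Cuts

variable {α : Type*} [DecidableEq α] {G : SimpleGraph α} {s C : Finset α} {σ : α}

theorem exists_adj_of_netOutflow_eq_one {f : α → α → ℕ}
    (hedge : ∀ u ∈ s, ∀ v ∈ s, ¬ G.Adj u v → f u v = 0)
    (hnet : ∀ u ∈ s.erase σ, netOutflow s f u = 1) (hC : C ⊆ s.erase σ) (hne : C.Nonempty) :
    ∃ u ∈ C, ∃ v ∈ s, v ∉ C ∧ G.Adj u v := by
  by_contra! hcut
  have hCs : C ⊆ s := hC.trans (Finset.erase_subset _ _)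
  have hzero : ∑ u ∈ C, netOutflow s f u = 0 :=
    sum_netOutflow_eq_zero_of_isolated hCs
      (fun u hu v hv hvC => hedge u (hCs hu) v hv (hcut u hu v hv hvC))
      (fun u hu v hv hvC => hedge v hv u (hCs hu) fun hvu => hcut u hu v hv hvC hvu.symm)
  rw [Finset.sum_congr rfl fun u hu => hnet u (hC hu)] at hzero
  exact hne.card_ne_zero (by simpa using hzero)

theorem connected_induce_of_forall_exists_adj (hσ : σ ∈ s)
    (hcut : ∀ C ⊆ s.erase σ, C.Nonempty → ∃ u ∈ C, ∃ v ∈ s, v ∉ C ∧ G.Adj u v) :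
    (G.induce (↑s : Set α)).Connected := by
  classical
  let H := G.induce (↑s : Set α)
  refine (SimpleGraph.connected_iff_exists_forall_reachable _).2 ⟨⟨σ, hσ⟩, ?_⟩
  by_contra! hunreach
  obtain ⟨w, hw⟩ := hunreach
  let C := {v ∈ s | ∀ hv : v ∈ s, ¬ H.Reachable ⟨σ, hσ⟩ ⟨v, hv⟩}
  have hC : C ⊆ s.erase σ := fun v hv => by
    obtain ⟨hvs, hvr⟩ := Finset.mem_filter.1 hv
    refine Finset.mem_erase.2 ⟨?_, hvs⟩
    rintro rfl
    exact hvr hvs .rfl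
  have hne : C.Nonempty := ⟨w, Finset.mem_filter.2 ⟨w.2, fun _ => hw⟩⟩
  obtain ⟨u, hu, v, hv, hvC, huv⟩ := hcut C hC hne
  obtain ⟨hus, hur⟩ := Finset.mem_filter.1 hu
  have hvr : H.Reachable ⟨σ, hσ⟩ ⟨v, hv⟩ := by
    by_contra hvr
    exact hvC (Finset.mem_filter.2 ⟨hv, fun _ => hvr⟩)
  have hvu : H.Adj ⟨v, hv⟩ ⟨u, hus⟩ := huv.symm
  exact hur hus (hvr.trans hvu.reachable)

end Cuts

section DartCount

variable {α : Type*} [DecidableEq α] {G : SimpleGraph α} {s : Finset α} {u v w x y : α}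

/-- The number of times the walk `p` traverses the arc from `x` to `y`, that is, the unit flow
along `p`. It is indexed by pairs of vertices, and so vanishes at non-adjacent pairs. -/
def dartCount (p : G.Walk u v) (x y : α) : ℕ :=
  (p.darts.map SimpleGraph.Dart.toProd).count (x, y)

@[simp]
theorem dartCount_nil : dartCount (.nil : G.Walk u u) x y = 0 := rfl

theorem dartCount_cons (h : G.Adj u v) (p : G.Walk v w) (x y : α) :
    dartCount (.cons h p) x y = dartCount p x y + if x = u ∧ y = v then 1 else 0 := by
  simp [dartCount, List.count_cons, eq_comm (a := x), eq_comm (a := y)]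

theorem dartCount_eq_zero_of_not_adj (p : G.Walk u v) (h : ¬ G.Adj x y) :
    dartCount p x y = 0 := by
  refine List.count_eq_zero.2 fun hmem => h ?_
  obtain ⟨d, -, hd⟩ := List.mem_map.1 hmem
  simpa [hd] using d.adj

theorem dartCount_le_one {p : G.Walk u v} (hp : p.IsPath) (x y : α) : dartCount p x y ≤ 1 :=
  List.nodup_iff_count_le_one.1
    ((SimpleGraph.Walk.darts_nodup_of_support_nodup hp.support_nodup).map
      SimpleGraph.Dart.toProd_injective) _

theorem dartCount_end_eq_zero {p : G.Walk u v} (hp : p.IsPath) (y : α) :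
    dartCount p v y = 0 := by
  induction p with
  | nil => rfl
  | cons h p ih =>
    obtain ⟨hp, hu⟩ := (SimpleGraph.Walk.cons_isPath_iff h p).1 hp
    rw [dartCount_cons, ih hp, if_neg]
    rintro ⟨rfl, -⟩
    exact hu p.end_mem_support

theorem netOutflow_dartCount (p : G.Walk u v) (hps : ∀ z ∈ p.support, z ∈ s) (x : α) :
    netOutflow s (dartCount p) x = (if x = u then 1 else 0) - (if x = v then 1 else 0) := by
  induction p with
  | nil => simp [netOutflow]
  | @cons u v w h p ih =>
    have hu : u ∈ s := hps u (by simp)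
    have hv : v ∈ s := hps v (by simp)
    have hrest := ih fun z hz => hps z (by simp [hz])
    have hfirst : ∑ y ∈ s, (((if x = u ∧ y = v then 1 else 0 : ℕ) : ℤ) -
        (if y = u ∧ x = v then 1 else 0 : ℕ)) =
        (if x = u then 1 else 0) - (if x = v then 1 else 0) := by
      simp [ite_and, hu, hv]
    rw [netOutflow] at hrest ⊢
    simp only [dartCount_cons, Nat.cast_add, add_sub_add_comm, Finset.sum_add_distrib, hrest,
      hfirst]
    ring

end DartCount

theorem exists_isPath_support_subset {α : Type*} {G : SimpleGraph α} {s : Set α} {u v : α}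
    (hconn : (G.induce s).Connected) (hu : u ∈ s) (hv : v ∈ s) :
    ∃ p : G.Walk u v, p.IsPath ∧ ∀ z ∈ p.support, z ∈ s := by
  obtain ⟨p, hp⟩ := hconn.exists_isPath ⟨u, hu⟩ ⟨v, hv⟩
  let φ := (SimpleGraph.Embedding.induce (G := G) s).toHom
  refine ⟨p.map φ, hp.map Subtype.val_injective, fun z hz => ?_⟩
  obtain ⟨z, -, rfl⟩ := List.mem_map.1 (p.support_map φ ▸ hz)
  exact z.2

section RoutedFlow

variable {α : Type*} [DecidableEq α] {G : SimpleGraph α} {s t : Finset α} {σ u : α}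

/-- The flow that sends, for every source `w` in `t`, one unit to `σ` along the walk `p w`. -/
def routedFlow (p : ∀ w : t, G.Walk w σ) (x y : α) : ℕ :=
  ∑ w, dartCount (p w) x y

variable {p : ∀ w : t, G.Walk w σ}

theorem routedFlow_eq_zero_of_not_adj (p : ∀ w : t, G.Walk w σ) {x y : α} (h : ¬ G.Adj x y) :
    routedFlow p x y = 0 :=
  Finset.sum_eq_zero fun w _ => dartCount_eq_zero_of_not_adj (p w) h

theorem routedFlow_le_card (hp : ∀ w, (p w).IsPath) (x y : α) : routedFlow p x y ≤ t.card := by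
  simpa [routedFlow] using
    Finset.sum_le_card_nsmul Finset.univ _ 1 fun w _ => dartCount_le_one (hp w) x y

theorem routedFlow_sink_eq_zero (hp : ∀ w, (p w).IsPath) (y : α) : routedFlow p σ y = 0 :=
  Finset.sum_eq_zero fun w _ => dartCount_end_eq_zero (hp w) y

theorem netOutflow_routedFlow (hps : ∀ w, ∀ z ∈ (p w).support, z ∈ s) (hu : u ∈ t) (hne : u ≠ σ) :
    netOutflow s (routedFlow p) u = 1 := by
  calc
    netOutflow s (routedFlow p) u
      = ∑ w, netOutflow s (dartCount (p w)) u := netOutflow_sum s _ _ u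
    _ = ∑ w : t, if u = w then 1 else 0 := by
      simp only [netOutflow_dartCount _ (hps _), if_neg hne, sub_zero]
    _ = 1 := by
      rw [Finset.sum_coe_sort t fun w => if u = w then (1 : ℤ) else 0, Finset.sum_ite_eq,
        if_pos hu]

end RoutedFlow

theorem induced_connected_iff_flow_general {α : Type*} [DecidableEq α]
    (G : SimpleGraph α) (s : Finset α) (σ : α) (hσ : σ ∈ s) :
    (G.induce (↑s : Set α)).Connected ↔
      ∃ f : α → α → ℕ,
        (∀ u ∈ s, ∀ v ∈ s, (u = v ∨ ¬ G.Adj u v) → f u v = 0) ∧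
        (∀ u ∈ s, ∀ v ∈ s, f u v ≤ s.card - 1) ∧
        (∑ u ∈ s.erase σ, f u σ) = s.card - 1 ∧
        (∀ v ∈ s, f σ v = 0) ∧
        (∀ u ∈ s.erase σ, (∑ v ∈ s.erase u, ((f u v : ℤ) - (f v u : ℤ))) = 1) := by
  constructor
  · intro hconn
    choose p hp hps using fun w : s.erase σ =>
      exists_isPath_support_subset hconn (Finset.mem_of_mem_erase w.2) hσ
    have hsink : ∀ v ∈ s, routedFlow p σ v = 0 := fun v _ => routedFlow_sink_eq_zero hp v
    have hnet : ∀ u ∈ s.erase σ, netOutflow s (routedFlow p) u = 1 := fun u hu =>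
      netOutflow_routedFlow hps hu (Finset.ne_of_mem_erase hu)
    refine ⟨routedFlow p, ?_, fun u _ v _ => ?_, sum_inflow_sink hσ hsink hnet, hsink, ?_⟩
    · rintro u - v - (rfl | huv)
      exacts [routedFlow_eq_zero_of_not_adj p (G.irrefl), routedFlow_eq_zero_of_not_adj p huv]
    · exact (routedFlow_le_card hp u v).trans_eq (Finset.card_erase_of_mem hσ)
    · simpa only [sum_erase_sub_eq_netOutflow] using hnet
  · rintro ⟨f, hedge, -, -, -, hnet⟩
    simp only [sum_erase_sub_eq_netOutflow] at hnet
    exact connected_induce_of_forall_exists_adj hσ fun C hC hne =>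
      exists_adj_of_netOutflow_eq_one (fun u hu v hv huv => hedge u hu v hv (.inr huv)) hnet hC hne

/-- For a simple graph `G` on a finite vertex set, a finite nonempty
vertex subset `s` and a sink `σ ∈ s`, the subgraph induced by `s` is connected iff there
is an integral flow `f` on `s × s` in which flow is sent only along edges of `G`, each
flow value is at most `|s| - 1`, the sink receives `|s| - 1` units and sends none, and
every other vertex of `s` has net outflow exactly one. -/
theorem induced_connected_iff_flow {α : Type*} [Fintype α] [DecidableEq α]
    (G : SimpleGraph α) (s : Finset α) (σ : α) (hσ : σ ∈ s) :
    (G.induce (↑s : Set α)).Connected ↔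
      ∃ f : α → α → ℕ,
        -- (0) flow only along edges of `G`, and each value at most `|s| - 1`:
        (∀ u ∈ s, ∀ v ∈ s, (u = v ∨ ¬ G.Adj u v) → f u v = 0) ∧
        (∀ u ∈ s, ∀ v ∈ s, f u v ≤ s.card - 1) ∧
        -- (a) the sink `σ` receives exactly `|s| - 1` units of flow:
        (∑ u ∈ s.erase σ, f u σ) = s.card - 1 ∧
        -- (b) the sink `σ` sends out no flow:
        (∀ v ∈ s, f σ v = 0) ∧
        -- (c) every other vertex of `s` sends out one unit more than it receives:
        (∀ u ∈ s.erase σ, (∑ v ∈ s.erase u, ((f u v : ℤ) - (f v u : ℤ))) = 1) :=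
  induced_connected_iff_flow_general G s σ hσ
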